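/- Every plain function-passing (PFP) well-structured rewriting system is accessible: for every PFP rule f l⃗ → r with Θ_f = Πx⃗:T⃗.U and |x⃗| = |l⃗|, and every substitution σ, if ⊢ Θ_f : s_f, Θ_f ∈ 𝒟 and [x⃗↦l⃗]σ ⊨ x⃗:T⃗, then σ ⊨ Δ_{f l⃗→r}. -/

import Mathlib

set_option maxHeartbeats 1000000

/-! # Terms of λΠ/R (de Bruijn representation) -/

inductive Trm (F : Type) : Type
  | type : Trm F
  | kind : Trm F
  | var : ℕ → Trm F
  | sym : F → Trm F
  | pi : Trm F → Trm F → Trm F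
  | app : Trm F → Trm F → Trm F
  | lam : Trm F → Trm F → Trm F

namespace Trm

variable {F : Type}

/-- Lifting of a renaming under a binder. -/
def upRen (ρ : ℕ → ℕ) : ℕ → ℕ
  | 0 => 0
  | n + 1 => ρ n + 1

/-- Renaming of (de Bruijn) variables. -/
def rename (ρ : ℕ → ℕ) : Trm F → Trm F
  | .type => .type
  | .kind => .kind
  | .var n => .var (ρ n)
  | .sym f => .sym f
  | .pi A B => .pi (rename ρ A) (rename (upRen ρ) B)
  | .app t u => .app (rename ρ t) (rename ρ u)
  | .lam A b => .lam (rename ρ A) (rename (upRen ρ) b)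

/-- Lifting of a substitution under a binder. -/
def up (σ : ℕ → Trm F) : ℕ → Trm F
  | 0 => .var 0
  | n + 1 => rename Nat.succ (σ n)

/-- Capture-avoiding (parallel) substitution. -/
def subst (σ : ℕ → Trm F) : Trm F → Trm F
  | .type => .type
  | .kind => .kind
  | .var n => σ n
  | .sym f => .sym f
  | .pi A B => .pi (subst σ A) (subst (up σ) B)
  | .app t u => .app (subst σ t) (subst σ u)
  | .lam A b => .lam (subst σ A) (subst (up σ) b)

/-- Cons of a term on a substitution: `scons a σ` maps `0` to `a` and `n+1` to `σ n`. -/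
def scons (a : Trm F) (σ : ℕ → Trm F) : ℕ → Trm F
  | 0 => a
  | n + 1 => σ n

/-- Substitution of the first free variable: `t[x ↦ a]`. -/
def subst1 (a t : Trm F) : Trm F := subst (scons a .var) t

/-- Shifting of all free variables. -/
def shift : Trm F → Trm F := rename Nat.succ

/-- Application of a head term to a list of arguments: `appList h [t1,…,tn] = h t1 … tn`. -/
def appList (h : Trm F) : List (Trm F) → Trm F
  | [] => h
  | a :: as => appList (.app h a) as

/-- Free (de Bruijn) variables of a term. -/
def FV : Trm F → Set ℕ
  | .type => ∅
  | .kind => ∅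
  | .var n => {n}
  | .sym _ => ∅
  | .pi A B => FV A ∪ {n | n + 1 ∈ FV B}
  | .app t u => FV t ∪ FV u
  | .lam A b => FV A ∪ {n | n + 1 ∈ FV b}

/-- The class 𝕂 of kinds: `K = TYPE | Πx:t.K`. -/
def IsKind : Trm F → Prop
  | .type => True
  | .pi _ B => IsKind B
  | _ => False

/-- Sorts: `TYPE` and `KIND`. -/
def IsSort (s : Trm F) : Prop := s = .type ∨ s = .kind

/-- The product arity of a term: the number of leading products. -/
def piArity : Trm F → ℕ
  | .pi _ B => piArity B + 1
  | _ => 0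

/-- Strip `n` leading products. -/
def piCodN : ℕ → Trm F → Trm F
  | 0, T => T
  | n + 1, .pi _ B => piCodN n B
  | _ + 1, T => T

/-- The first `n` domains of the leading products, as a de Bruijn context
(type of variable `0` first, i.e. innermost first). -/
def teleN : ℕ → Trm F → List (Trm F)
  | 0, _ => []
  | n + 1, .pi A B => teleN n B ++ [A]
  | _ + 1, _ => []

/-- The full telescope of leading products, as a de Bruijn context. -/
def telescope (T : Trm F) : List (Trm F) := teleN (piArity T) T

/-- The domains of the leading products, outermost first. -/
def piDoms : Trm F → List (Trm F)
  | .pi A B => A :: piDoms B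
  | _ => []

end Trm

/-- The subterm relation (reflexive and transitive). -/
inductive Subterm {F : Type} : Trm F → Trm F → Prop
  | refl (t : Trm F) : Subterm t t
  | piL {t A B} : Subterm t A → Subterm t (.pi A B)
  | piR {t A B} : Subterm t B → Subterm t (.pi A B)
  | appL {t u v} : Subterm t u → Subterm t (.app u v)
  | appR {t u v} : Subterm t v → Subterm t (.app u v)
  | lamL {t A b} : Subterm t A → Subterm t (.lam A b)
  | lamR {t A b} : Subterm t b → Subterm t (.lam A b)

/-! # Rewriting -/

/-- A set of rewriting rules `l → r`. -/
abbrev Rules (F : Type) := Set (Trm F × Trm F)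

/-- `R` is a rewriting system: for every rule `l → r`, `FV(r) ⊆ FV(l)` and
`l` is of the form `f l⃗`. -/
def IsRewriteSystem {F : Type} (R : Rules F) : Prop :=
  ∀ p ∈ R, Trm.FV p.2 ⊆ Trm.FV p.1 ∧ ∃ (f : F) (ls : List (Trm F)), p.1 = Trm.appList (.sym f) ls

/-- A symbol is defined if it heads the left-hand side of some rule. -/
def Defined {F : Type} (R : Rules F) (f : F) : Prop :=
  ∃ (ls : List (Trm F)) (r : Trm F), (Trm.appList (.sym f) ls, r) ∈ R

/-- One-step reduction `→ = →β ∪ →R`: β-reduction together with the closure of the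
rules of `R` by substitution and context. -/
inductive Red {F : Type} (R : Rules F) : Trm F → Trm F → Prop
  | beta (A b a : Trm F) : Red R (.app (.lam A b) a) (Trm.subst1 a b)
  | rule {l r : Trm F} (σ : ℕ → Trm F) : (l, r) ∈ R → Red R (Trm.subst σ l) (Trm.subst σ r)
  | appL {t t' u} : Red R t t' → Red R (.app t u) (.app t' u)
  | appR {t u u'} : Red R u u' → Red R (.app t u) (.app t u')
  | piL {A A' B} : Red R A A' → Red R (.pi A B) (.pi A' B)
  | piR {A B B'} : Red R B B' → Red R (.pi A B) (.pi A B')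
  | lamL {A A' b} : Red R A A' → Red R (.lam A b) (.lam A' b)
  | lamR {A b b'} : Red R b b' → Red R (.lam A b) (.lam A b')

/-- Multi-step reduction `→*`. -/
def RedStar {F : Type} (R : Rules F) : Trm F → Trm F → Prop := Relation.ReflTransGen (Red R)

/-- Joinability `↓`. -/
def Joinable {F : Type} (R : Rules F) (t u : Trm F) : Prop :=
  ∃ v, RedStar R t v ∧ RedStar R u v

/-- Local confluence: `← · → ⊆ →* · *←`. -/
def LocallyConfluent {F : Type} (R : Rules F) : Prop :=
  ∀ t u v, Red R t u → Red R t v → Joinable R u v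

/-- `t` is strongly normalizing (terminating): no infinite reduction sequence from `t`. -/
def SN {F : Type} (R : Rules F) (t : Trm F) : Prop := Acc (fun a b => Red R b a) t

/-- The set of strongly normalizing terms. -/
def SNset {F : Type} (R : Rules F) : Set (Trm F) := {t | SN R t}

/-- `t` is in normal form. -/
def NormalForm {F : Type} (R : Rules F) (t : Trm F) : Prop := ∀ u, ¬ Red R t u

/-- Neutral terms: `(λx:A.t)u v⃗`, `x v⃗`, or `f v⃗` where every rule `f l⃗ → r ∈ R`
satisfies `|l⃗| ≤ |v⃗|`. -/
def Neutral {F : Type} (R : Rules F) (t : Trm F) : Prop :=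
  (∃ (A b a : Trm F) (vs : List (Trm F)), t = Trm.appList (.app (.lam A b) a) vs) ∨
  (∃ (x : ℕ) (vs : List (Trm F)), t = Trm.appList (.var x) vs) ∨
  (∃ (f : F) (vs : List (Trm F)), t = Trm.appList (.sym f) vs ∧
    ∀ (ls : List (Trm F)) (r : Trm F), (Trm.appList (.sym f) ls, r) ∈ R → ls.length ≤ vs.length)

/-- Computability predicates: `S ⊆ SN`, `S` is closed under reduction, and `S` contains
every neutral term all of whose one-step reducts are in `S`. -/
def IsCompPred {F : Type} (R : Rules F) (S : Set (Trm F)) : Prop :=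
  S ⊆ SNset R ∧ (∀ t ∈ S, ∀ u, Red R t u → u ∈ S) ∧
  (∀ t, Neutral R t → (∀ u, Red R t u → u ∈ S) → t ∈ S)

/-! # Typing: λP extended with function symbols and conversion modulo `→` -/

/-- The typing rules of λΠ/R: the rules of λP (in de Bruijn presentation) with the extra
rule (fun) `⊢ f : Θ_f` and conversion up to joinability for `→`. -/
inductive Typing {F : Type} (R : Rules F) (Θ sΘ : F → Trm F) :
    List (Trm F) → Trm F → Trm F → Prop
  | ax : Typing R Θ sΘ [] .type .kind
  | var {Γ A s} : Trm.IsSort s → Typing R Θ sΘ Γ A s →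
      Typing R Θ sΘ (A :: Γ) (.var 0) (Trm.shift A)
  | weak {Γ A s b B} : Trm.IsSort s → Typing R Θ sΘ Γ A s → Typing R Θ sΘ Γ b B →
      Typing R Θ sΘ (A :: Γ) (Trm.shift b) (Trm.shift B)
  | prod {Γ A B s} : Trm.IsSort s → Typing R Θ sΘ Γ A .type → Typing R Θ sΘ (A :: Γ) B s →
      Typing R Θ sΘ Γ (.pi A B) s
  | abs {Γ A b B s} : Trm.IsSort s → Typing R Θ sΘ (A :: Γ) b B →
      Typing R Θ sΘ Γ (.pi A B) s → Typing R Θ sΘ Γ (.lam A b) (.pi A B)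
  | app {Γ t a A B} : Typing R Θ sΘ Γ t (.pi A B) → Typing R Θ sΘ Γ a A →
      Typing R Θ sΘ Γ (.app t a) (Trm.subst1 a B)
  | conv {Γ a A B s} : Typing R Θ sΘ Γ a A → Joinable R A B → Typing R Θ sΘ Γ B s →
      Trm.IsSort s → Typing R Θ sΘ Γ a B
  | symb (f : F) : Trm.IsSort (sΘ f) → Typing R Θ sΘ [] (Θ f) (sΘ f) →
      Typing R Θ sΘ [] (.sym f) (Θ f)

/-- `→` preserves typing (subject reduction). -/
def PresTyping {F : Type} (R : Rules F) (Θ sΘ : F → Trm F) : Prop :=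
  ∀ Γ t u T, Typing R Θ sΘ Γ t T → Red R t u → Typing R Θ sΘ Γ u T

/-- A substitution `γ` is well-typed from `Δ` to `Γ` (for a generic typing judgment `Ty`):
for all `(x : T) ∈ Δ`, `Ty Γ (xγ) (Tγ)`. -/
def SubstTyped {F : Type} (Ty : List (Trm F) → Trm F → Trm F → Prop)
    (Γ : List (Trm F)) (γ : ℕ → Trm F) (Δ : List (Trm F)) : Prop :=
  ∀ i A, Δ[i]? = some A → Ty Γ (γ i) (Trm.subst (fun j => γ (j + i + 1)) A)

/-! # Interpretation of types as computability predicates -/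

/-- `𝕀`: partial functions from terms to sets of terms. -/
abbrev Interp (F : Type) := Trm F → Part (Set (Trm F))

/-- Graph inclusion of partial functions. -/
def InterpLE {F : Type} (I J : Interp F) : Prop := ∀ T S, S ∈ I T → S ∈ J T

/-- `I` is the least fixpoint of `φ` on `𝕀` (ordered by graph inclusion). -/
def IsLfpInterp {F : Type} (φ : Interp F → Interp F) (I : Interp F) : Prop :=
  φ I = I ∧ ∀ J, φ J = J → InterpLE I J

/-- The domain `D(I)`: terminating terms `T` such that whenever `T →* Πx:A.B`,
`A ∈ dom(I)` and `B[x↦a] ∈ dom(I)` for all `a ∈ I(A)`. -/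
def domD {F : Type} (R : Rules F) (I : Interp F) : Set (Trm F) :=
  {T | SN R T ∧ ∀ A B, RedStar R T (.pi A B) →
    (I A).Dom ∧ ∀ S ∈ I A, ∀ a ∈ S, (I (Trm.subst1 a B)).Dom}

/-- `{t | ∀ a ∈ I(A), t a ∈ I(B[x↦a])}` (relational reading of the partial function `I`). -/
def piPart {F : Type} (I : Interp F) (A B : Trm F) : Set (Trm F) :=
  {t | ∀ S ∈ I A, ∀ a ∈ S, ∀ S' ∈ I (Trm.subst1 a B), Trm.app t a ∈ S'}

open Classical in
/-- The monotone function `F : 𝕀 → 𝕀`: `dom(F(I)) = D(I)`; `F(I)(T) = SN` if the normal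
form of `T` is not a product; `F(I)(T) = {t | ∀ a ∈ I(A), t a ∈ I(B[x↦a])}` if the normal
form of `T` is `Πx:A.B`. -/
noncomputable def interpF {F : Type} (R : Rules F) (I : Interp F) : Interp F := fun T =>
  ⟨T ∈ domD R I, fun _ =>
    if h : ∃ A B, RedStar R T (.pi A B) ∧ NormalForm R (.pi A B) then
      piPart I h.choose h.choose_spec.choose
    else SNset R⟩

/-- The value of a partial interpretation at `T` (as a set). -/
def partMem {F : Type} (I : Interp F) (T : Trm F) : Set (Trm F) := {t | ∀ S ∈ I T, t ∈ S}

open Classical in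
/-- The interpretation `⟦T⟧σ` of a term `T` wrt a substitution `σ`, relative to the least
fixpoint `I = ℐ` of `interpF`: `⟦s⟧σ = 𝒟` for `s` a sort;
`⟦Πx:A.K⟧σ = {t | ∀ a ∈ ⟦A⟧σ, t a ∈ ⟦K⟧[x↦a,σ]}` for `K` a kind;
`⟦T⟧σ = ℐ(Tσ)` if `T` is neither a kind nor `KIND` and `Tσ ∈ 𝒟`; `⟦T⟧σ = SN` otherwise. -/
noncomputable def interp {F : Type} (R : Rules F) (I : Interp F) :
    Trm F → (ℕ → Trm F) → Set (Trm F)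
  | .type, _ => domD R I
  | .kind, _ => domD R I
  | .pi A B, σ =>
      if Trm.IsKind B then
        {t | ∀ a ∈ interp R I A σ, Trm.app t a ∈ interp R I B (Trm.scons a σ)}
      else if Trm.subst σ (.pi A B) ∈ domD R I then partMem I (Trm.subst σ (.pi A B))
      else SNset R
  | .var n, σ =>
      if Trm.subst σ (.var n) ∈ domD R I then partMem I (Trm.subst σ (.var n)) else SNset R
  | .sym g, σ =>
      if Trm.subst σ (.sym g) ∈ domD R I then partMem I (Trm.subst σ (.sym g)) else SNset R
  | .app t u, σ =>
      if Trm.subst σ (.app t u) ∈ domD R I then partMem I (Trm.subst σ (.app t u)) else SNset R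
  | .lam A b, σ =>
      if Trm.subst σ (.lam A b) ∈ domD R I then partMem I (Trm.subst σ (.lam A b)) else SNset R

/-- `σ ⊨ Γ`: a substitution is adequate wrt an environment. -/
def Models {F : Type} (R : Rules F) (I : Interp F) (σ : ℕ → Trm F) (Γ : List (Trm F)) : Prop :=
  ∀ i A, Γ[i]? = some A → σ i ∈ interp R I A (fun j => σ (j + i + 1))

/-- The typing map `Θ` is adequate: `f ∈ ⟦Θ_f⟧` whenever `⊢ Θ_f : s_f` and `Θ_f ∈ ⟦s_f⟧`. -/
def Adequate {F : Type} (R : Rules F) (Θ sΘ : F → Trm F) (I : Interp F) : Prop :=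
  ∀ f : F, Typing R Θ sΘ [] (Θ f) (sΘ f) → Θ f ∈ interp R I (sΘ f) Trm.var →
    Trm.sym f ∈ interp R I (Θ f) Trm.var

/-- The substitution `[x⃗ ↦ l⃗]` (where `ls` lists the images of variables `0, 1, …`). -/
def mkSubst {F : Type} (ls : List (Trm F)) : ℕ → Trm F := fun i =>
  (ls[i]?).getD (.var (i - ls.length))

/-- Composition of substitutions: `x ↦ (xγ)σ`. -/
def compSubst {F : Type} (γ σ : ℕ → Trm F) : ℕ → Trm F := fun i => Trm.subst σ (γ i)

/-- The set `ℂ` of terms `f t⃗` with `|t⃗| = arit(Θ_f)`, `⊢ Θ_f : s_f`, `Θ_f ∈ ⟦s_f⟧` and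
`[x⃗↦t⃗] ⊨ Γ_f`. -/
def CC {F : Type} (R : Rules F) (Θ sΘ : F → Trm F) (I : Interp F) : Set (Trm F) :=
  {t | ∃ (f : F) (ts : List (Trm F)), t = Trm.appList (.sym f) ts ∧
    ts.length = Trm.piArity (Θ f) ∧
    Typing R Θ sΘ [] (Θ f) (sΘ f) ∧ Θ f ∈ interp R I (sΘ f) Trm.var ∧
    Models R I (mkSubst ts.reverse) (Trm.telescope (Θ f))}

/-! # Dependency pairs -/

/-- Occurrences of `p` in a term, not at the root, such that `p` is not further applied
(i.e. `p` collects all the arguments of its head at this occurrence). -/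
inductive MaxOccNR {F : Type} (p : Trm F) : Trm F → Prop
  | appL {u v} : MaxOccNR p u → MaxOccNR p (.app u v)
  | appR {u v} : MaxOccNR p v → MaxOccNR p (.app u v)
  | appRroot {u} : MaxOccNR p (.app u p)
  | piL {A B} : MaxOccNR p A → MaxOccNR p (.pi A B)
  | piLroot {B} : MaxOccNR p (.pi p B)
  | piR {A B} : MaxOccNR p B → MaxOccNR p (.pi A B)
  | piRroot {A} : MaxOccNR p (.pi A p)
  | lamL {A b} : MaxOccNR p A → MaxOccNR p (.lam A b)
  | lamLroot {b} : MaxOccNR p (.lam p b)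
  | lamR {A b} : MaxOccNR p b → MaxOccNR p (.lam A b)
  | lamRroot {A} : MaxOccNR p (.lam A p)

/-- `p` occurs in `t` as a maximal application. -/
def MaxOcc {F : Type} (p t : Trm F) : Prop := t = p ∨ MaxOccNR p t

/-- Dependency pairs: `f l⃗ > g m⃗` iff there is a rule `f l⃗ → r ∈ R`, `g` is defined and
`g m⃗` is a subterm of `r` such that `m⃗` are all the arguments to which `g` is applied. -/
def DepPair {F : Type} (R : Rules F) (f : F) (ls : List (Trm F)) (g : F)
    (ms : List (Trm F)) : Prop :=
  Defined R g ∧ ∃ r, (Trm.appList (.sym f) ls, r) ∈ R ∧ MaxOcc (Trm.appList (.sym g) ms) r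

/-- `f t⃗ →arg f u⃗`: reduction of exactly one argument. -/
def ArgRed {F : Type} (R : Rules F) (t u : Trm F) : Prop :=
  ∃ (f : F) (pre post : List (Trm F)) (a b : Trm F), Red R a b ∧
    t = Trm.appList (.sym f) (pre ++ a :: post) ∧ u = Trm.appList (.sym f) (pre ++ b :: post)

/-- `>ₛ`: the closure of the dependency pair relation by substitution and left-application:
`f t₁…t_p >ₛ g u₁…u_q` iff there are a dependency pair `f l₁…l_i > g m₁…m_j` with `i ≤ p`
and `j ≤ q` and a substitution `σ` such that `t_k →* l_kσ` for `k ≤ i` and `m_kσ = u_k`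
for `k ≤ j`. -/
def GTsub {F : Type} (R : Rules F) (t u : Trm F) : Prop :=
  ∃ (f g : F) (ts us ls ms : List (Trm F)) (σ : ℕ → Trm F),
    t = Trm.appList (.sym f) ts ∧ u = Trm.appList (.sym g) us ∧
    DepPair R f ls g ms ∧ ls.length ≤ ts.length ∧ ms.length ≤ us.length ∧
    (∀ (k : ℕ) (tk lk : Trm F), ts[k]? = some tk → ls[k]? = some lk → RedStar R tk (Trm.subst σ lk)) ∧
    (∀ (k : ℕ) (mk : Trm F), ms[k]? = some mk → us[k]? = some (Trm.subst σ mk))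

/-- The call relation `≻̃ = →arg* · >ₛ` on `ℂ`. -/
def CallRel {F : Type} (R : Rules F) (Θ sΘ : F → Trm F) (I : Interp F) (t u : Trm F) : Prop :=
  t ∈ CC R Θ sΘ I ∧ u ∈ CC R Θ sΘ I ∧
    ∃ v, Relation.ReflTransGen (ArgRed R) t v ∧ GTsub R v u

/-! # Precedence and well-structured systems -/

/-- `f ⪰ g` (one step): `g` occurs in `Θ_f` or in the right-hand side of a rule of `f`. -/
def PrecBase {F : Type} (R : Rules F) (Θ : F → Trm F) (f g : F) : Prop :=
  Subterm (.sym g) (Θ f) ∨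
  ∃ (ls : List (Trm F)) (r : Trm F), (Trm.appList (.sym f) ls, r) ∈ R ∧ Subterm (.sym g) r

/-- `⪰`: the smallest quasi-order containing `PrecBase`. -/
def Preceq {F : Type} (R : Rules F) (Θ : F → Trm F) : F → F → Prop :=
  Relation.ReflTransGen (PrecBase R Θ)

/-- `≻`: the strict part of `⪰`. -/
def Prec {F : Type} (R : Rules F) (Θ : F → Trm F) (f g : F) : Prop :=
  Preceq R Θ f g ∧ ¬ Preceq R Θ g f

/-- The restricted type system `⊢_{≺ f}`: as `Typing`, but function symbols may only be
introduced when strictly smaller than `f` in the precedence. -/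
inductive LTyp {F : Type} (R : Rules F) (Θ sΘ : F → Trm F) (f : F) :
    List (Trm F) → Trm F → Trm F → Prop
  | ax : LTyp R Θ sΘ f [] .type .kind
  | var {Γ A s} : Trm.IsSort s → LTyp R Θ sΘ f Γ A s →
      LTyp R Θ sΘ f (A :: Γ) (.var 0) (Trm.shift A)
  | weak {Γ A s b B} : Trm.IsSort s → LTyp R Θ sΘ f Γ A s → LTyp R Θ sΘ f Γ b B →
      LTyp R Θ sΘ f (A :: Γ) (Trm.shift b) (Trm.shift B)
  | prod {Γ A B s} : Trm.IsSort s → LTyp R Θ sΘ f Γ A .type → LTyp R Θ sΘ f (A :: Γ) B s →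
      LTyp R Θ sΘ f Γ (.pi A B) s
  | abs {Γ A b B s} : Trm.IsSort s → LTyp R Θ sΘ f (A :: Γ) b B →
      LTyp R Θ sΘ f Γ (.pi A B) s → LTyp R Θ sΘ f Γ (.lam A b) (.pi A B)
  | app {Γ t a A B} : LTyp R Θ sΘ f Γ t (.pi A B) → LTyp R Θ sΘ f Γ a A →
      LTyp R Θ sΘ f Γ (.app t a) (Trm.subst1 a B)
  | conv {Γ a A B s} : LTyp R Θ sΘ f Γ a A → Joinable R A B → LTyp R Θ sΘ f Γ B s →
      Trm.IsSort s → LTyp R Θ sΘ f Γ a B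
  | symb (g : F) : Prec R Θ f g → Trm.IsSort (sΘ g) → LTyp R Θ sΘ f [] (Θ g) (sΘ g) →
      LTyp R Θ sΘ f [] (.sym g) (Θ g)

/-- The arguments `y⃗γ = [y₁γ, …, y_jγ]` of an instantiated dependency pair right-hand
side, where `y_j` is de Bruijn variable `0`. -/
def dpArgs {F : Type} (γ : ℕ → Trm F) (j : ℕ) : List (Trm F) :=
  (List.range j).reverse.map γ

/-- The restricted type system `⊢_{f l⃗}` (computability closure): as `Typing`, except that
types are required to be typable using symbols smaller than `f` only, and function symbols
are introduced either as undefined constants or through instances of dependency pairs of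
`f l⃗`. -/
inductive RTyp {F : Type} (R : Rules F) (Θ sΘ : F → Trm F) (f : F) (ls : List (Trm F)) :
    List (Trm F) → Trm F → Trm F → Prop
  | ax : RTyp R Θ sΘ f ls [] .type .kind
  | var {Γ A s} : Trm.IsSort s → LTyp R Θ sΘ f Γ A s →
      RTyp R Θ sΘ f ls (A :: Γ) (.var 0) (Trm.shift A)
  | weak {Γ A s b B} : Trm.IsSort s → LTyp R Θ sΘ f Γ A s → RTyp R Θ sΘ f ls Γ b B →
      RTyp R Θ sΘ f ls (A :: Γ) (Trm.shift b) (Trm.shift B)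
  | prod {Γ A B s} : Trm.IsSort s → RTyp R Θ sΘ f ls Γ A .type →
      RTyp R Θ sΘ f ls (A :: Γ) B s → RTyp R Θ sΘ f ls Γ (.pi A B) s
  | abs {Γ A b B s} : Trm.IsSort s → RTyp R Θ sΘ f ls (A :: Γ) b B →
      LTyp R Θ sΘ f Γ (.pi A B) s → RTyp R Θ sΘ f ls Γ (.lam A b) (.pi A B)
  | app {Γ t a A B s} : Trm.IsSort s → RTyp R Θ sΘ f ls Γ t (.pi A B) →
      RTyp R Θ sΘ f ls Γ a A → LTyp R Θ sΘ f Γ (.pi A B) s →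
      RTyp R Θ sΘ f ls Γ (.app t a) (Trm.subst1 a B)
  | conv {Γ a A B s s'} : Trm.IsSort s → Trm.IsSort s' → RTyp R Θ sΘ f ls Γ a A →
      Joinable R A B → LTyp R Θ sΘ f Γ B s → LTyp R Θ sΘ f Γ A s' →
      RTyp R Θ sΘ f ls Γ a B
  | dp {Γ : List (Trm F)} (g : F) (γ : ℕ → Trm F) (j : ℕ) :
      j ≤ Trm.piArity (Θ g) → Trm.IsSort (sΘ g) → LTyp R Θ sΘ f [] (Θ g) (sΘ g) →
      (∀ i A, (Trm.teleN j (Θ g))[i]? = some A →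
        RTyp R Θ sΘ f ls Γ (γ i) (Trm.subst (fun k => γ (k + i + 1)) A)) →
      DepPair R f ls g (dpArgs γ j) →
      RTyp R Θ sΘ f ls Γ (Trm.appList (.sym g) (dpArgs γ j)) (Trm.subst γ (Trm.piCodN j (Θ g)))
  | const (g : F) : ¬ Defined R g → Trm.IsSort (sΘ g) → LTyp R Θ sΘ f [] (Θ g) (sΘ g) →
      RTyp R Θ sΘ f ls [] (.sym g) (Θ g)

/-- `R` is well-structured (wrt the assignment `Δ` of an environment to every rule):
(a) `≻` is well-founded; (b) `|l⃗| ≤ arit(Θ_f)` for every rule `f l⃗ → r`;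
(c) `|m⃗| ≤ arit(Θ_g)` for every dependency pair `f l⃗ > g m⃗`;
(d) `Δ_{f l⃗→r} ⊢_{f l⃗} r : U[x⃗↦l⃗]` for every rule `f l⃗ → r`, where `Θ_f = Πx⃗:T⃗.U`. -/
def WellStructured {F : Type} (R : Rules F) (Θ sΘ : F → Trm F)
    (Δ : Trm F → Trm F → List (Trm F)) : Prop :=
  WellFounded (fun g f => Prec R Θ f g) ∧
  (∀ l r, (l, r) ∈ R → ∀ (f : F) ls, l = Trm.appList (.sym f) ls →
    ls.length ≤ Trm.piArity (Θ f)) ∧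
  (∀ (f : F) ls (g : F) ms, DepPair R f ls g ms → ms.length ≤ Trm.piArity (Θ g)) ∧
  (∀ l r, (l, r) ∈ R → ∀ (f : F) ls, l = Trm.appList (.sym f) ls →
    RTyp R Θ sΘ f ls (Δ l r) r (Trm.subst (mkSubst ls.reverse) (Trm.piCodN ls.length (Θ f))))

/-- `R` is accessible: for every rule `f l⃗ → r` with `Θ_f = Πx⃗:T⃗.U`, `|x⃗| = |l⃗|`, and
every substitution `σ`, `σ ⊨ Δ_{f l⃗→r}` whenever `⊢ Θ_f : s_f`, `Θ_f ∈ ⟦s_f⟧` and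
`[x⃗↦l⃗]σ ⊨ x⃗:T⃗`. -/
def Accessible {F : Type} (R : Rules F) (Θ sΘ : F → Trm F) (I : Interp F)
    (Δ : Trm F → Trm F → List (Trm F)) : Prop :=
  ∀ l r, (l, r) ∈ R → ∀ (f : F) ls, l = Trm.appList (.sym f) ls → ∀ σ : ℕ → Trm F,
    Typing R Θ sΘ [] (Θ f) (sΘ f) → Θ f ∈ interp R I (sΘ f) Trm.var →
    Models R I (compSubst (mkSubst ls.reverse) σ) (Trm.teleN ls.length (Θ f)) →
    Models R I σ (Δ l r)

/-- A term in `𝕂 ∪ {KIND}`. -/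
def IsKindLike {F : Type} (t : Trm F) : Prop := Trm.IsKind t ∨ t = .kind

/-- `R` is plain function-passing (PFP): for every rule `f l⃗ → r` with `Θ_f = Πx⃗:T⃗.U` and
`|x⃗| = |l⃗|`, no `l_i` is a kind or `KIND`, and every `(y : T) ∈ Δ_{f l⃗→r}` satisfies:
either there is `i` with `y = l_i` and `T = T_i[x⃗↦l⃗]`, or `y ∈ FV(l_i)` and `T = D t⃗`
with `D` undefined and `|t⃗| = arit(Θ_D)`. -/
def PFP {F : Type} (R : Rules F) (Θ : F → Trm F) (Δ : Trm F → Trm F → List (Trm F)) : Prop :=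
  ∀ l r, (l, r) ∈ R → ∀ (f : F) ls, l = Trm.appList (.sym f) ls →
    (∀ li ∈ ls, ¬ IsKindLike li) ∧
    (∀ i A, (Δ l r)[i]? = some A →
      (∃ (k : ℕ) (Tk : Trm F), ls[k]? = some (Trm.var i) ∧ (Trm.piDoms (Θ f))[k]? = some Tk ∧
        Trm.rename (fun j => j + i + 1) A = Trm.subst (mkSubst ((ls.take k).reverse)) Tk) ∨
      ((∃ (k : ℕ) (lk : Trm F), ls[k]? = some lk ∧ i ∈ Trm.FV lk) ∧
        ∃ (D : F) (ts : List (Trm F)), Trm.rename (fun j => j + i + 1) A =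
          Trm.appList (.sym D) ts ∧ ¬ Defined R D ∧ ts.length = Trm.piArity (Θ D)))

/-! # Size-change termination -/

/-- Entries of size-change matrices: `−1`, `0` or `∞`. -/
inductive SCTe : Type
  | minusOne : SCTe
  | zero : SCTe
  | infty : SCTe
deriving DecidableEq

/-- Min-plus multiplication of entries (addition, truncated at `−1`). -/
def SCTe.comp : SCTe → SCTe → SCTe
  | .infty, _ => .infty
  | _, .infty => .infty
  | .minusOne, _ => .minusOne
  | _, .minusOne => .minusOne
  | .zero, .zero => .zero

/-- Minimum of entries (`−1 < 0 < ∞`). -/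
def SCTe.min : SCTe → SCTe → SCTe
  | .minusOne, _ => .minusOne
  | _, .minusOne => .minusOne
  | .zero, _ => .zero
  | .infty, x => x

/-- Base of the relation `⊵`: `f t₁…t_n ⊵ t_i` for `f ∈ F`. -/
def ArgSubBase {F : Type} (t u : Trm F) : Prop :=
  ∃ (f : F) (ts : List (Trm F)), t = Trm.appList (.sym f) ts ∧ u ∈ ts

/-- `⊵`: the smallest transitive relation such that `f t₁…t_n ⊵ t_i` for `f ∈ F`. -/
def ArgGT {F : Type} : Trm F → Trm F → Prop := Relation.TransGen ArgSubBase

open Classical in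
/-- The size-change matrix of a dependency pair `f l₁…l_p > g m₁…m_q`:
`a_{ij} = −1` if `l_i ⊵ m_j`, `a_{ij} = 0` if `l_i = m_j`, `a_{ij} = ∞` otherwise
(in particular if `i > p` or `j > q`). -/
noncomputable def dpMatrix {F : Type} (ls ms : List (Trm F)) : ℕ → ℕ → SCTe := fun i j =>
  match ls[i]?, ms[j]? with
  | some li, some mj =>
      if ArgGT li mj then .minusOne else if li = mj then .zero else .infty
  | _, _ => .infty

/-- Min-plus product of matrices, the middle dimension being `d`. -/
def matComp (d : ℕ) (M N : ℕ → ℕ → SCTe) : ℕ → ℕ → SCTe := fun i j =>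
  ((List.range d).map fun k => (M i k).comp (N k j)).foldr SCTe.min .infty

/-- The transitive closure of the call graph of `R`: edges are labeled by the matrices of
the dependency pairs, multiplied in the min-plus semiring along paths. -/
inductive TCEdge {F : Type} (R : Rules F) (Θ : F → Trm F) : F → F → (ℕ → ℕ → SCTe) → Prop
  | base {f g : F} {ls ms : List (Trm F)} : DepPair R f ls g ms →
      TCEdge R Θ f g (dpMatrix ls ms)
  | comp {f g h : F} {M N : ℕ → ℕ → SCTe} : TCEdge R Θ f g M → TCEdge R Θ g h N →
      TCEdge R Θ f h (matComp (Trm.piArity (Θ g)) M N)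

/-- `R` is size-change terminating: in the transitive closure of the call graph, every
idempotent matrix labeling a loop has some `−1` on its diagonal. -/
def SCT {F : Type} (R : Rules F) (Θ : F → Trm F) : Prop :=
  ∀ (f : F) (M : ℕ → ℕ → SCTe), TCEdge R Θ f f M → matComp (Trm.piArity (Θ f)) M M = M →
    ∃ i < Trm.piArity (Θ f), M i i = SCTe.minusOne

/-!
The environment of a PFP rule `f l⃗ → r` types a variable `y` in one of two ways.

* `y` is an argument `lᵢ`, of type `Tᵢ[x⃗ ↦ l⃗]`. No `lᵢ` being a kind, interpretation commutes
  with this substitution: `⟦Tᵢ[x⃗ ↦ l⃗]⟧σ = ⟦Tᵢ⟧([x⃗ ↦ l⃗]σ)`, which contains `lᵢσ = yσ`.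
* `y` occurs in some `lᵢ` and its type is `D t⃗` with `D` undefined. No reduct of `(D t⃗)σ` is a
  product, so `⟦D t⃗⟧σ = SN`; and `yσ` terminates because it occurs in
  `lᵢσ ∈ ⟦Tᵢ⟧([x⃗ ↦ l⃗]σ)`, whose elements terminate.

That interpretations contain only terminating terms is shown together with the fact that they
contain the terminating terms headed by a variable or an undefined symbol: if `t ∈ ⟦Πx:A.B⟧`, then
`t x ∈ ⟦B⟧` for a variable `x ∈ ⟦A⟧`, so `t` terminates. The induction is on types, `A` and all
`B[x ↦ a]` with `a ∈ ℐ(A)` being below `Πx:A.B`. This order is well-founded on `𝒟` because the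
restriction of `ℐ` to the types accessible for it is again a fixpoint, hence all of `ℐ`.
-/

/-! ### Substitution -/

namespace Trm

variable {F : Type}

theorem rename_eq_subst (ρ : ℕ → ℕ) (t : Trm F) :
    rename ρ t = subst (fun n => .var (ρ n)) t := by
  have up_var (ρ : ℕ → ℕ) :
      (fun n => (.var (upRen ρ n) : Trm F)) = up fun n => .var (ρ n) := by
    funext n; cases n <;> rfl
  induction t generalizing ρ <;> simp_all [rename, subst]

theorem subst_rename (σ : ℕ → Trm F) (ρ : ℕ → ℕ) (t : Trm F) :
    subst σ (rename ρ t) = subst (fun n => σ (ρ n)) t := by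
  have up_comp (σ : ℕ → Trm F) (ρ : ℕ → ℕ) :
      (fun n => up σ (upRen ρ n)) = up fun n => σ (ρ n) := by
    funext n; cases n <;> rfl
  induction t generalizing σ ρ <;> simp_all [rename, subst]

theorem rename_rename (ρ' ρ : ℕ → ℕ) (t : Trm F) :
    rename ρ' (rename ρ t) = rename (fun n => ρ' (ρ n)) t := by
  rw [rename_eq_subst ρ', subst_rename, rename_eq_subst]

theorem rename_subst (ρ : ℕ → ℕ) (σ : ℕ → Trm F) (t : Trm F) :
    rename ρ (subst σ t) = subst (fun n => rename ρ (σ n)) t := by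
  have up_rename (ρ : ℕ → ℕ) (σ : ℕ → Trm F) :
      (fun n => rename (upRen ρ) (up σ n)) = up fun n => rename ρ (σ n) := by
    funext n
    cases n with
    | zero => rfl
    | succ n => simp only [up, rename_rename, upRen]
  induction t generalizing ρ σ <;> simp_all [rename, subst]

theorem subst_subst (σ γ : ℕ → Trm F) (t : Trm F) :
    subst σ (subst γ t) = subst (compSubst γ σ) t := by
  have up_compSubst (σ γ : ℕ → Trm F) : compSubst (up γ) (up σ) = up (compSubst γ σ) := by
    funext n
    cases n with
    | zero => rfl
    | succ n => simp only [compSubst, up, subst_rename, rename_subst]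
  induction t generalizing σ γ with
  | var _ => rfl
  | _ => simp_all [subst]

theorem rename_subst1 (ρ : ℕ → ℕ) (a b : Trm F) :
    rename ρ (subst1 a b) = subst1 (rename ρ a) (rename (upRen ρ) b) := by
  simp only [subst1, rename_subst, subst_rename]
  congr 1; funext n; cases n <;> rfl

theorem compSubst_up_scons (γ σ : ℕ → Trm F) (a : Trm F) :
    compSubst (up γ) (scons a σ) = scons a (compSubst γ σ) := by
  funext n
  cases n with
  | zero => rfl
  | succ n => simp only [compSubst, up, subst_rename, scons]

theorem subst_appList (σ : ℕ → Trm F) (h : Trm F) (ts : List (Trm F)) :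
    subst σ (appList h ts) = appList (subst σ h) (ts.map (subst σ)) := by
  induction ts generalizing h with
  | nil => rfl
  | cons a _ ih => exact ih (.app h a)

theorem isKind_rename (ρ : ℕ → ℕ) (t : Trm F) : IsKind (rename ρ t) ↔ IsKind t := by
  induction t generalizing ρ <;> simp_all [rename, IsKind]

theorem isKind_subst {γ : ℕ → Trm F} (hγ : ∀ n, ¬ IsKind (γ n)) (t : Trm F) :
    IsKind (subst γ t) ↔ IsKind t := by
  induction t generalizing γ with
  | var n => exact iff_of_false (hγ n) id
  | pi _ _ _ ihB =>
    refine ihB fun n => ?_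
    cases n with
    | zero => exact id
    | succ n => exact (isKind_rename _ _).not.2 (hγ n)
  | _ => rfl

theorem length_piDoms (T : Trm F) : (piDoms T).length = piArity T := by
  induction T <;> simp_all [piDoms, piArity]

theorem teleN_eq_reverse_take_piDoms (n : ℕ) (T : Trm F) :
    teleN n T = ((piDoms T).take n).reverse := by
  induction n generalizing T with
  | zero => simp [teleN]
  | succ n ih => cases T <;> simp [teleN, piDoms, ih]

end Trm

section KindLike

variable {F : Type}

theorem not_isKindLike_var (n : ℕ) : ¬ IsKindLike (.var n : Trm F) := by
  simp [IsKindLike, Trm.IsKind]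

theorem isKindLike_rename (ρ : ℕ → ℕ) (t : Trm F) :
    IsKindLike (Trm.rename ρ t) ↔ IsKindLike t := by
  refine or_congr (Trm.isKind_rename ρ t) ?_
  cases t <;> simp [Trm.rename]

theorem isKindLike_subst {γ : ℕ → Trm F} (hγ : ∀ n, ¬ IsKindLike (γ n)) (t : Trm F) :
    IsKindLike (Trm.subst γ t) ↔ IsKindLike t := by
  refine or_congr (Trm.isKind_subst (fun n h => hγ n (.inl h)) t) ?_
  cases t with
  | var n => exact iff_of_false (fun h => hγ n (.inr h)) nofun
  | _ => simp [Trm.subst]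

theorem not_isKindLike_up {γ : ℕ → Trm F} (hγ : ∀ n, ¬ IsKindLike (γ n)) (n : ℕ) :
    ¬ IsKindLike (Trm.up γ n) := by
  cases n with
  | zero => exact not_isKindLike_var 0
  | succ n => exact (isKindLike_rename _ _).not.2 (hγ n)

theorem not_isKindLike_mkSubst {ls : List (Trm F)} (h : ∀ l ∈ ls, ¬ IsKindLike l) (n : ℕ) :
    ¬ IsKindLike (mkSubst ls n) := by
  unfold mkSubst
  cases hn : ls[n]? with
  | none => exact not_isKindLike_var _
  | some l => exact h l (List.mem_of_getElem? hn)

/-- Case analysis following the clauses of `interp`. -/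
@[elab_as_elim]
theorem Trm.kind_induction {P : Trm F → Prop} (type : P .type) (kind : P .kind)
    (pi : ∀ A B, B.IsKind → P A → P B → P (.pi A B)) (other : ∀ T, ¬ IsKindLike T → P T)
    (T : Trm F) : P T := by
  induction T with
  | type => exact type
  | kind => exact kind
  | pi A B ihA ihB =>
    by_cases hB : B.IsKind
    · exact pi A B hB ihA ihB
    · exact other _ (by simpa [IsKindLike, Trm.IsKind] using hB)
  | _ => exact other _ (by simp [IsKindLike, Trm.IsKind])

end KindLike

theorem mkSubst_append_add {F : Type} (us vs : List (Trm F)) (j : ℕ) :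
    mkSubst (us ++ vs) (us.length + j) = mkSubst vs j := by
  simp only [mkSubst, List.getElem?_append_right (Nat.le_add_right _ _), List.length_append,
    Nat.add_sub_cancel_left, Nat.add_sub_add_left]

/-! ### Termination -/

section Reduction

variable {F : Type} {R : Rules F}

theorem Red.rename (ρ : ℕ → ℕ) {t u : Trm F} (h : Red R t u) :
    Red R (Trm.rename ρ t) (Trm.rename ρ u) := by
  induction h generalizing ρ with
  | beta _ _ _ => rw [Trm.rename_subst1]; exact .beta _ _ _
  | rule _ hr => rw [Trm.rename_subst, Trm.rename_subst]; exact .rule _ hr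
  | appL _ ih => exact .appL (ih ρ)
  | appR _ ih => exact .appR (ih ρ)
  | piL _ ih => exact .piL (ih ρ)
  | piR _ ih => exact .piR (ih _)
  | lamL _ ih => exact .lamL (ih ρ)
  | lamR _ ih => exact .lamR (ih _)

theorem SN.of_map {g : Trm F → Trm F} (hg : ∀ t u, Red R t u → Red R (g t) (g u)) {t : Trm F}
    (h : SN R (g t)) : SN R t :=
  Subrelation.accessible (hg _ _) (InvImage.accessible g h)

theorem SN.of_rename {ρ : ℕ → ℕ} {t : Trm F} (h : SN R (Trm.rename ρ t)) : SN R t :=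
  h.of_map fun _ _ hr => hr.rename ρ

theorem SN.of_app_left {t u : Trm F} (h : SN R (.app t u)) : SN R t :=
  SN.of_map (g := (.app · u)) (fun _ _ => .appL) h

theorem SN.of_subst_of_mem_FV {t : Trm F} {σ : ℕ → Trm F} {i : ℕ} (h : SN R (Trm.subst σ t))
    (hi : i ∈ Trm.FV t) : SN R (σ i) := by
  induction t generalizing σ i with
  | type | kind | sym _ => exact hi.elim
  | var n => obtain rfl : i = n := hi; exact h
  | app t u iht ihu =>
    rcases hi with hi | hi
    · exact iht h.of_app_left hi
    · exact ihu (h.of_map (g := .app _) fun _ _ => .appR) hi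
  | pi A B ihA ihB =>
    rcases hi with hi | hi
    · exact ihA (h.of_map (g := (.pi · _)) fun _ _ => .piL) hi
    · exact (ihB (h.of_map (g := .pi _) fun _ _ => .piR) hi).of_rename
  | lam A b ihA ihb =>
    rcases hi with hi | hi
    · exact ihA (h.of_map (g := (.lam · _)) fun _ _ => .lamL) hi
    · exact (ihb (h.of_map (g := .lam _) fun _ _ => .lamR) hi).of_rename

/-- Every left-hand side of `R` is of the form `f l⃗`. -/
def SymHeaded (R : Rules F) : Prop :=
  ∀ p ∈ R, ∃ (f : F) (ls : List (Trm F)), p.1 = Trm.appList (.sym f) ls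

/-- The head of the term, below its arguments, is a variable or an undefined symbol: it survives
every reduction. -/
def RigidHead (R : Rules F) : Trm F → Prop
  | .var _ => True
  | .sym g => ¬ Defined R g
  | .app t _ => RigidHead R t
  | _ => False

theorem rigidHead_appList {h : Trm F} {ts : List (Trm F)} :
    RigidHead R (Trm.appList h ts) ↔ RigidHead R h := by
  induction ts generalizing h with
  | nil => rfl
  | cons _ _ ih => exact ih

theorem RigidHead.not_isKindLike {t : Trm F} (h : RigidHead R t) : ¬ IsKindLike t := by
  cases t <;> simp_all [RigidHead, IsKindLike, Trm.IsKind]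

theorem not_rigidHead_subst_lhs (hR : SymHeaded R) {l r : Trm F} (hr : (l, r) ∈ R)
    (σ : ℕ → Trm F) : ¬ RigidHead R (Trm.subst σ l) := by
  obtain ⟨f, ls, rfl : l = _⟩ := hR _ hr
  rw [Trm.subst_appList, rigidHead_appList]
  exact not_not_intro ⟨ls, r, hr⟩

theorem RigidHead.red (hR : SymHeaded R) {t u : Trm F} (ht : RigidHead R t) (h : Red R t u) :
    RigidHead R u := by
  induction h with
  | rule σ hr => exact absurd ht (not_rigidHead_subst_lhs hR hr σ)
  | appL _ ih => exact ih ht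
  | appR _ _ => exact ht
  | _ => exact ht.elim

theorem RigidHead.redStar (hR : SymHeaded R) {t u : Trm F} (ht : RigidHead R t)
    (h : RedStar R t u) : RigidHead R u := by
  induction h with
  | refl => exact ht
  | tail _ h ih => exact ih.red hR h

theorem RigidHead.not_redStar_pi (hR : SymHeaded R) {t : Trm F} (ht : RigidHead R t)
    (A B : Trm F) : ¬ RedStar R t (.pi A B) :=
  ht.redStar hR

theorem not_red_var (hR : SymHeaded R) (n : ℕ) (u : Trm F) : ¬ Red R (.var n) u := by
  intro h
  generalize ht : Trm.var n = t at h
  cases h with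
  | rule σ hr => exact not_rigidHead_subst_lhs hR hr σ (ht ▸ trivial)
  | _ => cases ht

theorem RigidHead.red_app_cases (hR : SymHeaded R) {t a u : Trm F} (ht : RigidHead R t)
    (h : Red R (.app t a) u) :
    (∃ t', Red R t t' ∧ u = .app t' a) ∨ ∃ a', Red R a a' ∧ u = .app t a' := by
  generalize hv : Trm.app t a = v at h
  cases h with
  | beta _ _ _ => cases hv; exact ht.elim
  | rule σ hr =>
    have hrigid : RigidHead R (.app t a) := ht
    exact absurd (hv ▸ hrigid) (not_rigidHead_subst_lhs hR hr σ)
  | appL h => cases hv; exact .inl ⟨_, h, rfl⟩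
  | appR h => cases hv; exact .inr ⟨_, h, rfl⟩
  | _ => cases hv

theorem RigidHead.sn_app (hR : SymHeaded R) {t a : Trm F} (hrigid : RigidHead R t)
    (ht : SN R t) (ha : SN R a) : SN R (.app t a) := by
  induction ht generalizing a with
  | intro t _ iht =>
    induction ha with
    | intro a ha iha =>
      refine Acc.intro _ fun u hu => ?_
      obtain ⟨t', ht', rfl⟩ | ⟨a', ha', rfl⟩ := hrigid.red_app_cases hR hu
      · exact iht t' ht' (hrigid.red hR ht') (Acc.intro a ha)
      · exact iha a' ha'

end Reduction

/-! ### Saturated sets -/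

section Saturated

variable {F : Type} {R : Rules F}

/-- `S` lies between the set of terminating terms with a rigid head and the set of terminating
terms. This is weaker than `IsCompPred`, which also requires stability by reduction and by
expansion. -/
def Saturated (R : Rules F) (S : Set (Trm F)) : Prop :=
  S ⊆ SNset R ∧ ∀ t, RigidHead R t → SN R t → t ∈ S

theorem Saturated.var_mem (hR : SymHeaded R) {S : Set (Trm F)} (h : Saturated R S) (n : ℕ) :
    .var n ∈ S :=
  h.2 _ trivial (Acc.intro _ fun u hu => absurd hu (not_red_var hR n u))

theorem saturated_SNset : Saturated R (SNset R) := ⟨subset_rfl, fun _ _ ht => ht⟩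

theorem saturated_domD (hR : SymHeaded R) (I : Interp F) : Saturated R (domD R I) :=
  ⟨fun _ hT => hT.1, fun _ hrigid hT => ⟨hT, fun A B h => absurd h (hrigid.not_redStar_pi hR A B)⟩⟩

theorem Saturated.pi (hR : SymHeaded R) {X : Set (Trm F)} {Y : Trm F → Set (Trm F)}
    (hX : Saturated R X) (hY : ∀ a ∈ X, Saturated R (Y a)) :
    Saturated R {t | ∀ a ∈ X, Trm.app t a ∈ Y a} := by
  refine ⟨fun t ht => ?_, fun t hrigid ht a ha => ?_⟩
  · have hx : .var 0 ∈ X := hX.var_mem hR 0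
    exact ((hY _ hx).1 (ht _ hx)).of_app_left
  · exact (hY a ha).2 (.app t a) hrigid (hrigid.sn_app hR ht (hX.1 ha))

end Saturated

/-! ### Fixpoints of `interpF` -/

section Fixpoint

variable {F : Type} {R : Rules F} {I : Interp F} {T : Trm F}

open Classical in
/-- The value `F(I)(T)`, extended to all terms `T` by ignoring the domain condition `T ∈ D(I)`. -/
noncomputable def interpVal (R : Rules F) (I : Interp F) (T : Trm F) : Set (Trm F) :=
  if h : ∃ A B, RedStar R T (.pi A B) ∧ NormalForm R (.pi A B) then
    piPart I h.choose h.choose_spec.choose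
  else SNset R

theorem mem_interpF {S : Set (Trm F)} :
    S ∈ interpF R I T ↔ T ∈ domD R I ∧ S = interpVal R I T :=
  ⟨fun ⟨h, e⟩ => ⟨h, e.symm⟩, fun ⟨h, e⟩ => ⟨h, e.symm⟩⟩

-- `A` and `B` depend on the reducts of `T` only, which makes two interpretations comparable.
theorem interpVal_eq_piPart_or_eq_SNset (R : Rules F) (T : Trm F) :
    (∃ A B, RedStar R T (.pi A B) ∧ ∀ I, interpVal R I T = piPart I A B) ∨
      ∀ I, interpVal R I T = SNset R := by
  by_cases h : ∃ A B, RedStar R T (.pi A B) ∧ NormalForm R (.pi A B)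
  · exact .inl ⟨_, _, h.choose_spec.choose_spec.1, fun _ => dif_pos h⟩
  · exact .inr fun _ => dif_neg h

theorem interpVal_of_not_redStar_pi (h : ∀ A B, ¬ RedStar R T (.pi A B)) :
    interpVal R I T = SNset R :=
  dif_neg fun ⟨A, B, hT, _⟩ => h A B hT

theorem mem_iff_of_fixpoint (hI : interpF R I = I) {S : Set (Trm F)} :
    S ∈ I T ↔ T ∈ domD R I ∧ S = interpVal R I T := by
  rw [← mem_interpF, hI]

theorem dom_iff_mem_domD (hI : interpF R I = I) : (I T).Dom ↔ T ∈ domD R I :=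
  Iff.of_eq (congrArg Part.Dom (congrFun hI T)).symm

theorem partMem_eq_interpVal (hI : interpF R I = I) (hT : T ∈ domD R I) :
    partMem I T = interpVal R I T := by
  simp [partMem, mem_iff_of_fixpoint hI, hT]

theorem piPart_eq_setOf (hI : interpF R I = I) {A B : Trm F} (hA : A ∈ domD R I)
    (hB : ∀ a ∈ interpVal R I A, Trm.subst1 a B ∈ domD R I) :
    piPart I A B =
      {t | ∀ a ∈ interpVal R I A, Trm.app t a ∈ interpVal R I (Trm.subst1 a B)} := by
  ext t
  simp +contextual [piPart, mem_iff_of_fixpoint hI, hA, hB]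

/-- The immediate components of a type `T →* Πx:A.B`: the term `A` and the terms `B[x ↦ a]` for
`a ∈ I(A)`. -/
inductive Component (R : Rules F) (I : Interp F) : Trm F → Trm F → Prop
  | dom {T A B : Trm F} : RedStar R T (.pi A B) → Component R I A T
  | cod {T A B a : Trm F} {S : Set (Trm F)} : RedStar R T (.pi A B) → S ∈ I A → a ∈ S →
      Component R I (Trm.subst1 a B) T

/-- The restriction of `I` to the types that are accessible for `Component R I`. -/
def accRestrict (R : Rules F) (I : Interp F) : Interp F := fun T =>
  Part.assert (Acc (Component R I) T) fun _ => I T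

theorem mem_accRestrict {S : Set (Trm F)} :
    S ∈ accRestrict R I T ↔ Acc (Component R I) T ∧ S ∈ I T := by
  simp [accRestrict, Part.mem_assert_iff]

theorem accRestrict_dom_iff : (accRestrict R I T).Dom ↔ Acc (Component R I) T ∧ (I T).Dom :=
  exists_prop

theorem mem_domD_accRestrict :
    T ∈ domD R (accRestrict R I) ↔ Acc (Component R I) T ∧ T ∈ domD R I := by
  constructor
  · rintro ⟨hT, h⟩
    have hdom A B (hr : RedStar R T (.pi A B)) := accRestrict_dom_iff.1 (h A B hr).1
    have hcod A B (hr : RedStar R T (.pi A B)) S (hS : S ∈ I A) a (ha : a ∈ S) :=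
      accRestrict_dom_iff.1 ((h A B hr).2 S (mem_accRestrict.2 ⟨(hdom A B hr).1, hS⟩) a ha)
    refine ⟨Acc.intro T fun T' hT' => ?_, hT, fun A B hr =>
      ⟨(hdom A B hr).2, fun S hS a ha => (hcod A B hr S hS a ha).2⟩⟩
    cases hT' with
    | dom hr => exact (hdom _ _ hr).1
    | cod hr hS ha => exact (hcod _ _ hr _ hS _ ha).1
  · rintro ⟨hacc, hT, h⟩
    exact ⟨hT, fun A B hr => ⟨accRestrict_dom_iff.2 ⟨hacc.inv (.dom hr), (h A B hr).1⟩,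
      fun S hS a ha =>
        have hS := (mem_accRestrict.1 hS).2
        accRestrict_dom_iff.2 ⟨hacc.inv (.cod hr hS ha), (h A B hr).2 S hS a ha⟩⟩⟩

theorem piPart_accRestrict {A B : Trm F} (hacc : Acc (Component R I) T)
    (hr : RedStar R T (.pi A B)) : piPart (accRestrict R I) A B = piPart I A B := by
  ext t
  constructor
  · intro ht S hS a ha S' hS'
    exact ht S (mem_accRestrict.2 ⟨hacc.inv (.dom hr), hS⟩) a ha S'
      (mem_accRestrict.2 ⟨hacc.inv (.cod hr hS ha), hS'⟩)
  · intro ht S hS a ha S' hS'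
    exact ht S (mem_accRestrict.1 hS).2 a ha S' (mem_accRestrict.1 hS').2

theorem interpVal_accRestrict (hacc : Acc (Component R I) T) :
    interpVal R (accRestrict R I) T = interpVal R I T := by
  obtain ⟨A, B, hr, hval⟩ | hval := interpVal_eq_piPart_or_eq_SNset R T
  · rw [hval, hval, piPart_accRestrict hacc hr]
  · rw [hval, hval]

theorem interpF_accRestrict (hI : interpF R I = I) :
    interpF R (accRestrict R I) = accRestrict R I := by
  funext T
  ext S
  rw [mem_interpF, mem_accRestrict, mem_iff_of_fixpoint hI, mem_domD_accRestrict, and_assoc]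
  exact and_congr_right fun hacc => by rw [interpVal_accRestrict hacc]

theorem IsLfpInterp.acc_component (hlfp : IsLfpInterp (interpF R) I) (hT : T ∈ domD R I) :
    Acc (Component R I) T :=
  (mem_accRestrict.1 (hlfp.2 _ (interpF_accRestrict hlfp.1) T _
    ((mem_iff_of_fixpoint hlfp.1).2 ⟨hT, rfl⟩))).1

theorem saturated_interpVal (hR : SymHeaded R) (hlfp : IsLfpInterp (interpF R) I)
    (hT : T ∈ domD R I) : Saturated R (interpVal R I T) := by
  have hI := hlfp.1
  induction hlfp.acc_component hT with
  | intro T _ ih =>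
    obtain ⟨A, B, hr, hval⟩ | hval := interpVal_eq_piPart_or_eq_SNset R T
    · have hA : A ∈ domD R I := (dom_iff_mem_domD hI).1 (hT.2 A B hr).1
      have hIA : interpVal R I A ∈ I A := (mem_iff_of_fixpoint hI).2 ⟨hA, rfl⟩
      have hB : ∀ a ∈ interpVal R I A, Trm.subst1 a B ∈ domD R I := fun a ha =>
        (dom_iff_mem_domD hI).1 ((hT.2 A B hr).2 _ hIA a ha)
      rw [hval, piPart_eq_setOf hI hA hB]
      exact (ih A (.dom hr) hA).pi hR fun a ha => ih _ (.cod hr hIA ha) (hB a ha)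
    · rw [hval]
      exact saturated_SNset

end Fixpoint

/-! ### Interpretation of types -/

section Interpretation

variable {F : Type} {R : Rules F} {I : Interp F}

theorem interp_pi_of_isKind {A B : Trm F} (hB : B.IsKind) (σ : ℕ → Trm F) :
    interp R I (.pi A B) σ =
      {t | ∀ a ∈ interp R I A σ, Trm.app t a ∈ interp R I B (Trm.scons a σ)} := by
  rw [interp, if_pos hB]

open Classical in
theorem interp_of_not_isKindLike {T : Trm F} (hT : ¬ IsKindLike T) (σ : ℕ → Trm F) :
    interp R I T σ =
      if Trm.subst σ T ∈ domD R I then partMem I (Trm.subst σ T) else SNset R := by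
  cases T with
  | type => exact absurd (.inl trivial) hT
  | kind => exact absurd (.inr rfl) hT
  | pi A B =>
    have hB : ¬ B.IsKind := fun hB => hT (.inl hB)
    rw [interp, if_neg hB]
  | _ => rw [interp]

theorem interp_subst {γ : ℕ → Trm F} (hγ : ∀ n, ¬ IsKindLike (γ n)) (T : Trm F) (σ : ℕ → Trm F) :
    interp R I (Trm.subst γ T) σ = interp R I T (compSubst γ σ) := by
  induction T using Trm.kind_induction generalizing γ σ with
  | type | kind => simp only [Trm.subst, interp]
  | pi A B hB ihA ihB =>
    have hB' : (Trm.subst (Trm.up γ) B).IsKind :=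
      (Trm.isKind_subst (fun n h => not_isKindLike_up hγ n (.inl h)) B).2 hB
    simp only [Trm.subst, interp_pi_of_isKind hB, interp_pi_of_isKind hB', ihA hγ,
      ihB (not_isKindLike_up hγ), Trm.compSubst_up_scons]
  | other T hT =>
    rw [interp_of_not_isKindLike hT, interp_of_not_isKindLike ((isKindLike_subst hγ T).not.2 hT),
      Trm.subst_subst]

theorem interp_rename (ρ : ℕ → ℕ) (T : Trm F) (σ : ℕ → Trm F) :
    interp R I (Trm.rename ρ T) σ = interp R I T (fun n => σ (ρ n)) := by
  rw [Trm.rename_eq_subst, interp_subst fun n => not_isKindLike_var (ρ n)]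
  rfl

theorem saturated_interp (hR : SymHeaded R) (hlfp : IsLfpInterp (interpF R) I) (T : Trm F)
    (σ : ℕ → Trm F) : Saturated R (interp R I T σ) := by
  induction T using Trm.kind_induction generalizing σ with
  | type | kind => simpa only [interp] using saturated_domD hR I
  | pi A B hB ihA ihB =>
    rw [interp_pi_of_isKind hB]
    exact (ihA σ).pi hR fun a _ => ihB (Trm.scons a σ)
  | other T hT =>
    rw [interp_of_not_isKindLike hT]
    split_ifs with hdom
    · rw [partMem_eq_interpVal hlfp.1 hdom]
      exact saturated_interpVal hR hlfp hdom
    · exact saturated_SNset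

theorem interp_appList_sym_of_not_defined (hR : SymHeaded R) (hI : interpF R I = I) {D : F}
    (hD : ¬ Defined R D) (ts : List (Trm F)) (σ : ℕ → Trm F) :
    interp R I (Trm.appList (.sym D) ts) σ = SNset R := by
  have hrigid (us : List (Trm F)) : RigidHead R (Trm.appList (.sym D) us) := rigidHead_appList.2 hD
  rw [interp_of_not_isKindLike (hrigid ts).not_isKindLike, Trm.subst_appList]
  split_ifs with hdom
  · rw [partMem_eq_interpVal hI hdom]
    exact interpVal_of_not_redStar_pi ((hrigid _).not_redStar_pi hR)
  · rfl

end Interpretation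

/-! ### Environments -/

section Models

variable {F : Type} {R : Rules F} {I : Interp F} {σ : ℕ → Trm F}

theorem models_iff_rename {Γ : List (Trm F)} :
    Models R I σ Γ ↔ ∀ i A, Γ[i]? = some A →
      σ i ∈ interp R I (Trm.rename (fun j => j + i + 1) A) σ := by
  simp only [Models, interp_rename]

theorem Models.subst_arg_mem {T : Trm F} {ls : List (Trm F)}
    (hσ : Models R I (compSubst (mkSubst ls.reverse) σ) (Trm.teleN ls.length T))
    (hlen : ls.length ≤ Trm.piArity T) {k : ℕ} {lk Tk : Trm F} (hk : ls[k]? = some lk)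
    (hTk : (Trm.piDoms T)[k]? = some Tk) :
    Trm.subst σ lk ∈ interp R I Tk (compSubst (mkSubst (ls.take k).reverse) σ) := by
  obtain ⟨hlt, rfl⟩ := List.getElem?_eq_some_iff.1 hk
  -- Argument `k`, counted from the left, is the de Bruijn variable `|l⃗| - 1 - k`.
  have htype : (Trm.teleN ls.length T)[ls.length - 1 - k]? = some Tk := by
    have hdoms : ((Trm.piDoms T).take ls.length).length = ls.length := by
      rw [List.length_take, Trm.length_piDoms, min_eq_left hlen]
    rw [Trm.teleN_eq_reverse_take_piDoms, List.getElem?_reverse (by omega), hdoms,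
      show ls.length - 1 - (ls.length - 1 - k) = k by omega, List.getElem?_take_of_lt hlt, hTk]
  have harg : mkSubst ls.reverse (ls.length - 1 - k) = ls[k] := by
    rw [mkSubst, List.getElem?_reverse (by omega),
      show ls.length - 1 - (ls.length - 1 - k) = k by omega, hk, Option.getD_some]
  have hprefix (j : ℕ) :
      mkSubst ls.reverse (j + (ls.length - 1 - k) + 1) = mkSubst (ls.take k).reverse j := by
    have hsplit : ls.reverse = (ls.drop k).reverse ++ (ls.take k).reverse := by
      rw [← List.reverse_append, List.take_append_drop]
    have hindex : j + (ls.length - 1 - k) + 1 = (ls.drop k).reverse.length + j := by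
      rw [List.length_reverse, List.length_drop]
      omega
    rw [hsplit, hindex, mkSubst_append_add]
  simpa +unfoldPartialApp only [compSubst, harg, hprefix] using hσ _ Tk htype

theorem Models.sn_of_mem_FV_arg (hR : SymHeaded R) (hlfp : IsLfpInterp (interpF R) I)
    {T : Trm F} {ls : List (Trm F)}
    (hσ : Models R I (compSubst (mkSubst ls.reverse) σ) (Trm.teleN ls.length T))
    (hlen : ls.length ≤ Trm.piArity T) {l : Trm F} (hl : l ∈ ls) {i : ℕ} (hi : i ∈ Trm.FV l) :
    SN R (σ i) := by
  obtain ⟨k, hk, rfl⟩ := List.getElem_of_mem hl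
  have hkT : k < (Trm.piDoms T).length := by rw [Trm.length_piDoms]; omega
  have hmem := hσ.subst_arg_mem hlen (List.getElem?_eq_getElem hk) (List.getElem?_eq_getElem hkT)
  have hsn : SN R (Trm.subst σ ls[k]) := (saturated_interp hR hlfp _ _).1 hmem
  exact hsn.of_subst_of_mem_FV hi

end Models

theorem pfp_accessible_general {F : Type} {R : Rules F} {Θ : F → Trm F} {I : Interp F}
    {Δ : Trm F → Trm F → List (Trm F)} (hR : SymHeaded R) (hlfp : IsLfpInterp (interpF R) I)
    (harity : ∀ f ls r, (Trm.appList (.sym f) ls, r) ∈ R → ls.length ≤ Trm.piArity (Θ f))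
    (hpfp : PFP R Θ Δ) {f : F} {ls : List (Trm F)} {r : Trm F}
    (hr : (Trm.appList (.sym f) ls, r) ∈ R) {σ : ℕ → Trm F}
    (hσ : Models R I (compSubst (mkSubst ls.reverse) σ) (Trm.teleN ls.length (Θ f))) :
    Models R I σ (Δ (Trm.appList (.sym f) ls) r) := by
  have hlen := harity f ls r hr
  obtain ⟨hls, hΔ⟩ := hpfp _ r hr f ls rfl
  refine models_iff_rename.2 fun i A hA => ?_
  rcases hΔ i A hA with ⟨k, Tk, hk, hTk, hAT⟩ | ⟨⟨k, l, hk, hi⟩, D, ts, hAD, hD, -⟩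
  · have hkind : ∀ l ∈ (ls.take k).reverse, ¬ IsKindLike l := fun l hl =>
      hls l (List.mem_of_mem_take (List.mem_reverse.1 hl))
    rw [hAT, interp_subst (not_isKindLike_mkSubst hkind)]
    exact hσ.subst_arg_mem hlen hk hTk
  · rw [hAD, interp_appList_sym_of_not_defined hR hlfp.1 hD]
    exact hσ.sn_of_mem_FV_arg hR hlfp hlen (List.mem_of_getElem? hk) hi

/-- Lemma 14 of the paper. Every plain function-passing well-structured
rewriting system is accessible. -/
theorem pfp_accessible {F : Type} (R : Rules F) (Θ sΘ : F → Trm F)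
    (hRS : IsRewriteSystem R)
    (hconf : LocallyConfluent R)
    (hpres : PresTyping R Θ sΘ)
    (calI : Interp F) (hlfp : IsLfpInterp (interpF R) calI)
    (Δ : Trm F → Trm F → List (Trm F))
    (hws : WellStructured R Θ sΘ Δ)
    (hpfp : PFP R Θ Δ) :
    Accessible R Θ sΘ calI Δ := by
  rintro _ r hr f ls rfl σ - - hσ
  exact pfp_accessible_general (fun p hp => (hRS p hp).2) hlfp
    (fun f ls r hr => hws.2.1 _ r hr f ls rfl) hpfp hr hσ
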